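/- arXiv:1308.4439 — 2 statements merged into one kernel-verified Lean document; each statement's English description precedes it below -/
import Mathlib

section
/- Let m, r, ñ be integers with ñ ≥ 1, r ≥ 1, m ≥ 0 and m = p·ñ − r. Then for every k ≥ 1 and every tuple (c_1,…,c_k) ∈ (ℤ_{≥0})^k with c_1+⋯+c_k = m, one has ‖π^{r−ñ} · b_{c_1}·b_{c_2}⋯b_{c_k}‖ ≤ 1/p. -/
open scoped BigOperators Classical

namespace AHG

/-- `hat v = (1, v) ∈ ℤ^{n+1}`: coordinate `0` equals `1`, the rest is `v`. -/
def hat {n : ℕ} (v : Fin n → ℤ) : Fin (n + 1) → ℤ := Fin.cons 1 v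

/-- The coefficients `b_i` of the Dwork series
`θ(t) = exp(π(t - t^p)) = exp(πt)·exp(-πt^p) = Σ b_i t^i`;
explicitly `b_i = Σ_{j + p k = i} π^{j+k} (-1)^k / (j! k!)`. -/
noncomputable def dworkB (p : ℕ) {K : Type*} [Field K] (π : K) (i : ℕ) : K :=
  ∑ k ∈ Finset.range (i + 1),
    if p * k ≤ i then
      ((-1 : K) ^ k * π ^ (i - p * k + k)) /
        ((Nat.factorial (i - p * k) : K) * (Nat.factorial k : K))
    else 0

/-- The real cone `C` generated by `â_0, …, â_N`. -/
def cone {n N : ℕ} (a : Fin (N + 1) → Fin n → ℤ) : Set (Fin (n + 1) → ℝ) :=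
  {x | ∃ t : Fin (N + 1) → ℝ, (∀ j, 0 ≤ t j) ∧
      x = ∑ j, t j • fun i => (hat (a j) i : ℝ)}

/-- `M = C ∩ ℤA`. -/
def latticeM {n N : ℕ} (a : Fin (N + 1) → Fin n → ℤ) : Set (Fin (n + 1) → ℤ) :=
  {μ | (fun i => (μ i : ℝ)) ∈ cone a ∧
      μ ∈ AddSubgroup.closure (Set.range fun j => hat (a j))}

/-- `M°`: the elements of `M` lying on no proper (exposed) face of `C`, i.e. every linear
functional nonnegative on `C` and vanishing at `μ` vanishes identically on `C`. -/
def latticeMint {n N : ℕ} (a : Fin (N + 1) → Fin n → ℤ) : Set (Fin (n + 1) → ℤ) :=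
  {μ | μ ∈ latticeM a ∧
      ∀ ℓ : (Fin (n + 1) → ℝ) →ₗ[ℝ] ℝ, (∀ x ∈ cone a, 0 ≤ ℓ x) →
        ℓ (fun i => (μ i : ℝ)) = 0 → ∀ x ∈ cone a, ℓ x = 0}

/-- `a 0` is the unique lattice point interior to `Δ = conv(a 1, …, a N)`. -/
def uniqueInteriorPoint {n N : ℕ} (a : Fin (N + 1) → Fin n → ℤ) : Prop :=
  (fun i => (a 0 i : ℝ)) ∈
      interior (convexHull ℝ (Set.range fun j : Fin N => fun i => (a j.succ i : ℝ))) ∧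
    ∀ v : Fin n → ℤ,
      (fun i => (v i : ℝ)) ∈
          interior (convexHull ℝ (Set.range fun j : Fin N => fun i => (a j.succ i : ℝ))) →
        v = a 0

/-- The set `L_+`, identified with the tuples `(l_1,…,l_N) ∈ ℤ_{≥0}^N` such that
`Σ l_i â_i = (Σ l_i) â_0` (then `l_0 = -Σ l_i`). -/
def LplusSet {n N : ℕ} (a : Fin (N + 1) → Fin n → ℤ) : Set (Fin N → ℕ) :=
  {l | ∑ i : Fin N, l i • hat (a i.succ) = (∑ i : Fin N, l i) • hat (a 0)}

/-- The norm (sup of coefficient norms) of an element of `R`, i.e. of a formal power series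
in the variables `λ_i/λ_0`, `i = 1, …, N`. -/
noncomputable def Rnorm {N : ℕ} {K : Type*} [NormedField K]
    (f : MvPowerSeries (Fin N) K) : ℝ :=
  ⨆ ν : Fin N →₀ ℕ, ‖f ν‖

/-- Membership in `R`: bounded coefficients. -/
def memR {N : ℕ} {K : Type*} [NormedField K] (f : MvPowerSeries (Fin N) K) : Prop :=
  BddAbove (Set.range fun ν : Fin N →₀ ℕ => ‖f ν‖)

/-- Norm-convergence (in the sup norm of `R`) of a series of elements of `R` to `g`. -/
def HasSumR {ι : Type*} {N : ℕ} {K : Type*} [NormedField K]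
    (f : ι → MvPowerSeries (Fin N) K) (g : MvPowerSeries (Fin N) K) : Prop :=
  Filter.Tendsto (fun s : Finset ι => Rnorm (g - ∑ i ∈ s, f i)) Filter.atTop (nhds 0)

/-- Invertibility in `R`. -/
def invR {N : ℕ} {K : Type*} [NormedField K] (f : MvPowerSeries (Fin N) K) : Prop :=
  memR f ∧ ∃ g : MvPowerSeries (Fin N) K, memR g ∧ f * g = 1

/-- `B_μ(1, y_1, …, y_N)` as a power series (in fact a polynomial) in `y_i = λ_i/λ_0`:
the coefficient of `y^ν` is `b_{ν_0} b_{ν_1} ⋯ b_{ν_N}` where `ν_0 = μ_0 - Σ ν_i`,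
whenever `(ν_0, ν_1, …, ν_N)` is a nonnegative solution of `Σ ν_i â_i = μ`, and `0` otherwise. -/
noncomputable def Bone (p : ℕ) {n N : ℕ} (a : Fin (N + 1) → Fin n → ℤ)
    {K : Type*} [Field K] (π : K) (μ : Fin (n + 1) → ℤ) : MvPowerSeries (Fin N) K :=
  fun ν =>
    if 0 ≤ μ 0 - ∑ i : Fin N, (ν i : ℤ) ∧
        (μ 0 - ∑ i : Fin N, (ν i : ℤ)) • hat (a 0) +
          ∑ i : Fin N, (ν i : ℤ) • hat (a i.succ) = μ then
      dworkB p π (μ 0 - ∑ i : Fin N, (ν i : ℤ)).toNat * ∏ i : Fin N, dworkB p π (ν i)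
    else 0

/-- The substitution `λ_i/λ_0 ↦ λ_i^p/λ_0^p` on `R`, i.e. `ξ(λ) ↦ ξ(λ^p)`. -/
noncomputable def frobR (p : ℕ) {N : ℕ} {K : Type*} [Field K]
    (f : MvPowerSeries (Fin N) K) : MvPowerSeries (Fin N) K :=
  fun ν => if h : ∃ ν' : Fin N →₀ ℕ, p • ν' = ν then f h.choose else 0

/-- The term indexed by `ν ∈ M°` in the series defining `η_ρ`:
`π^{ρ_0-ν_0} B_{pν-ρ}(1, λ_1/λ_0, …, λ_N/λ_0) ξ_ν(λ^p)` when `pν - ρ ∈ M`, else `0`. -/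
noncomputable def etaTerm (p : ℕ) {n N : ℕ} (a : Fin (N + 1) → Fin n → ℤ)
    {K : Type*} [Field K] (π : K)
    (ξ : {μ : Fin (n + 1) → ℤ // μ ∈ latticeMint a} → MvPowerSeries (Fin N) K)
    (ρ : Fin (n + 1) → ℤ) (ν : {μ : Fin (n + 1) → ℤ // μ ∈ latticeMint a}) :
    MvPowerSeries (Fin N) K :=
  if (p : ℤ) • ν.1 - ρ ∈ latticeM a then
    π ^ (ρ 0 - ν.1 0) • (Bone p a π ((p : ℤ) • ν.1 - ρ) * frobR p (ξ ν))
  else 0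


/-- The index type `M°` (as a subtype). -/
abbrev Msub {n N : ℕ} (a : Fin (N + 1) → Fin n → ℤ) : Type _ :=
  {μ : Fin (n + 1) → ℤ // μ ∈ latticeMint a}

/-- Membership in `S`: a family `(ξ_μ)_{μ ∈ M°}` of elements of `R` with uniformly
bounded coefficients. -/
def memS {n N : ℕ} (a : Fin (N + 1) → Fin n → ℤ) {K : Type*} [NormedField K]
    (ξ : {μ : Fin (n + 1) → ℤ // μ ∈ latticeMint a} → MvPowerSeries (Fin N) K) : Prop :=
  BddAbove (Set.range
    fun q : {μ : Fin (n + 1) → ℤ // μ ∈ latticeMint a} × (Fin N →₀ ℕ) => ‖ξ q.1 q.2‖)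

/-- The norm on `S`. -/
noncomputable def Snorm {n N : ℕ} (a : Fin (N + 1) → Fin n → ℤ) {K : Type*} [NormedField K]
    (ξ : {μ : Fin (n + 1) → ℤ // μ ∈ latticeMint a} → MvPowerSeries (Fin N) K) : ℝ :=
  ⨆ μ : {μ : Fin (n + 1) → ℤ // μ ∈ latticeMint a}, Rnorm (ξ μ)

/-- The truncation `Φ_1` of `Φ`, as a function of `λ = (λ_0, …, λ_N)`. -/
noncomputable def Phi1 (p : ℕ) {n N : ℕ} (a : Fin (N + 1) → Fin n → ℤ)
    {K : Type*} [Field K] (lam : Fin (N + 1) → K) : K :=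
  ∑ l ∈ (Fintype.piFinset fun _ : Fin N => Finset.range p).filter
      (fun l => l ∈ LplusSet a ∧ ∑ i : Fin N, l i ≤ p - 1),
    (-1 : K) ^ (∑ i : Fin N, l i) * (Nat.multinomial Finset.univ l : K) *
      ∏ i : Fin N, (lam i.succ / lam 0) ^ l i

/-- The open polydisk `𝒟`. -/
def Dopen {N : ℕ} {K : Type*} [NormedField K] : Set (Fin (N + 1) → K) :=
  {lam | lam 0 ≠ 0 ∧ ∀ i : Fin N, ‖lam i.succ / lam 0‖ < 1}

/-- The region `𝒟_+`. -/
def Dplus (p : ℕ) {n N : ℕ} (a : Fin (N + 1) → Fin n → ℤ) {K : Type*} [NormedField K] :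
    Set (Fin (N + 1) → K) :=
  {lam | lam 0 ≠ 0 ∧ (∀ i : Fin N, ‖lam i.succ / lam 0‖ ≤ 1) ∧ ‖Phi1 p a lam‖ = 1}

/-- `f` is (on `𝒟_+`) a rational function of `λ_1/λ_0, …, λ_N/λ_0` defined at every
point of `𝒟_+`. -/
def RatOnDplus (p : ℕ) {n N : ℕ} (a : Fin (N + 1) → Fin n → ℤ) {K : Type*} [NormedField K]
    (f : (Fin (N + 1) → K) → K) : Prop :=
  ∃ q r : MvPolynomial (Fin N) K,
    (∀ lam ∈ Dplus p a (K := K), MvPolynomial.eval (fun i => lam i.succ / lam 0) r ≠ 0) ∧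
    ∀ lam ∈ Dplus p a (K := K),
      f lam = MvPolynomial.eval (fun i => lam i.succ / lam 0) q /
        MvPolynomial.eval (fun i => lam i.succ / lam 0) r

/-- `F` is a uniform limit on `𝒟_+` of rational functions in the `λ_i/λ_0` defined
at every point of `𝒟_+`. -/
def UnifLimitRat (p : ℕ) {n N : ℕ} (a : Fin (N + 1) → Fin n → ℤ) {K : Type*} [NormedField K]
    (F : (Fin (N + 1) → K) → K) : Prop :=
  ∃ u : ℕ → (Fin (N + 1) → K) → K, (∀ k, RatOnDplus p a (u k)) ∧
    TendstoUniformlyOn u F Filter.atTop (Dplus p a (K := K))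

/-- Membership in `R'`: the power series converges on `𝒟` and its sum extends to an
element of `R'`, i.e. to a uniform limit on `𝒟_+` of rational functions in the `λ_i/λ_0`
defined at every point of `𝒟_+`. -/
def memR' (p : ℕ) {n N : ℕ} (a : Fin (N + 1) → Fin n → ℤ) {K : Type*} [NormedField K]
    (c : MvPowerSeries (Fin N) K) : Prop :=
  ∃ F : (Fin (N + 1) → K) → K, UnifLimitRat p a F ∧
    ∀ lam ∈ Dopen (N := N) (K := K),
      HasSum (fun ν : Fin N →₀ ℕ => c ν * ∏ i : Fin N, (lam i.succ / lam 0) ^ ν i) (F lam)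

/-- Invertibility in `R'`. -/
def invR' (p : ℕ) {n N : ℕ} (a : Fin (N + 1) → Fin n → ℤ) {K : Type*} [NormedField K]
    (f : MvPowerSeries (Fin N) K) : Prop :=
  memR' p a f ∧ ∃ g : MvPowerSeries (Fin N) K, memR' p a g ∧ f * g = 1

/-- Membership in `S'`. -/
def memS' (p : ℕ) {n N : ℕ} (a : Fin (N + 1) → Fin n → ℤ) {K : Type*} [NormedField K]
    (ξ : {μ : Fin (n + 1) → ℤ // μ ∈ latticeMint a} → MvPowerSeries (Fin N) K) : Prop :=
  memS a ξ ∧ ∀ μ, memR' p a (ξ μ)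

/-- Membership in `T`: `ξ ∈ S`, `ξ_{â_0} = 1` and `‖ξ‖ = 1`; the distinguished index
`μ0 ∈ M°` is the point `â_0`. -/
def memT {n N : ℕ} (a : Fin (N + 1) → Fin n → ℤ) {K : Type*} [NormedField K]
    (μ0 : {μ : Fin (n + 1) → ℤ // μ ∈ latticeMint a})
    (ξ : {μ : Fin (n + 1) → ℤ // μ ∈ latticeMint a} → MvPowerSeries (Fin N) K) : Prop :=
  memS a ξ ∧ ξ μ0 = 1 ∧ Snorm a ξ = 1

/-- `ζ` is a value of the map `β` at `ξ`: `ζ = α*(ξ)/η_{â_0}`, where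
`α*(ξ) = (η_ρ)_{ρ ∈ M°}` is given by the norm-convergent series of `etaTerm`s. -/
def isBeta (p : ℕ) {n N : ℕ} (a : Fin (N + 1) → Fin n → ℤ) {K : Type*} [NormedField K] (π : K)
    (μ0 : {μ : Fin (n + 1) → ℤ // μ ∈ latticeMint a})
    (ξ ζ : {μ : Fin (n + 1) → ℤ // μ ∈ latticeMint a} → MvPowerSeries (Fin N) K) : Prop :=
  ∃ η : {μ : Fin (n + 1) → ℤ // μ ∈ latticeMint a} → MvPowerSeries (Fin N) K,
    (∀ ρ, HasSumR (etaTerm p a π ξ ρ.1) (η ρ)) ∧ ∀ ρ, ζ ρ = η ρ * (η μ0)⁻¹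

/-- The coefficients `ξ_ρ` (Eq. (3.4) of the paper) of
`ξ(λ,x) = γ°(G(λ_0,x) ∏_{i=1}^N exp(πλ_i x^{â_i}))`:
`ξ_ρ = Σ (-1)^{ρ_0-1+Σl_i} (ρ_0-1+Σl_i)!/(l_1!⋯l_N!) ∏ (λ_i/λ_0)^{l_i}`, summed over
`(l_1,…,l_N) ∈ ℤ_{≥0}^N` such that `l_0 := ρ_0-1+Σl_i ≥ 0` and
`Σ l_i â_i - (l_0+1) â_0 = -ρ`. -/
noncomputable def xiRho {n N : ℕ} (a : Fin (N + 1) → Fin n → ℤ) (K : Type*) [Field K]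
    (ρ : Fin (n + 1) → ℤ) : MvPowerSeries (Fin N) K :=
  fun l =>
    if 0 ≤ ρ 0 - 1 + ∑ i : Fin N, (l i : ℤ) ∧
        (∑ i : Fin N, (l i : ℤ) • hat (a i.succ)) -
          (ρ 0 + ∑ i : Fin N, (l i : ℤ)) • hat (a 0) = -ρ then
      (-1 : K) ^ (ρ 0 - 1 + ∑ i : Fin N, (l i : ℤ)) *
        ((ρ 0 - 1 + ∑ i : Fin N, (l i : ℤ)).toNat.factorial : K) /
        ((∏ i : Fin N, (l i).factorial : ℕ) : K)
    else 0

/-- The series `Φ`, as a formal power series in the variables `λ_i/λ_0`. -/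
noncomputable def PhiSeries {n N : ℕ} (a : Fin (N + 1) → Fin n → ℤ) (K : Type*) [Field K] :
    MvPowerSeries (Fin N) K :=
  fun l =>
    if (fun i => l i) ∈ LplusSet a then
      (-1 : K) ^ (∑ i : Fin N, l i) * (Nat.multinomial Finset.univ l : K)
    else 0

/-- The truncation `Φ_1` of `Φ`, as a formal power series in the variables `λ_i/λ_0`. -/
noncomputable def Phi1Series (p : ℕ) {n N : ℕ} (a : Fin (N + 1) → Fin n → ℤ)
    (K : Type*) [Field K] : MvPowerSeries (Fin N) K :=
  fun l =>
    if (fun i => l i) ∈ LplusSet a ∧ ∑ i : Fin N, l i ≤ p - 1 then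
      (-1 : K) ^ (∑ i : Fin N, l i) * (Nat.multinomial Finset.univ l : K)
    else 0

/-- `B_μ(λ_0, …, λ_N)` as a function of `λ` (a finite sum; `finsum` junk value `0`
is irrelevant since the relevant index set is finite). -/
noncomputable def Bfull (p : ℕ) {n N : ℕ} (a : Fin (N + 1) → Fin n → ℤ)
    {K : Type*} [Field K] (π : K) (μ : Fin (n + 1) → ℤ) (lam : Fin (N + 1) → K) : K :=
  finsum fun ν : Fin (N + 1) → ℕ =>
    if ∑ j, ν j • hat (a j) = μ then
      (∏ j, dworkB p π (ν j)) * ∏ j, lam j ^ ν j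
    else 0

end AHG

open scoped BigOperators Classical

/-!
Since `π ^ (p - 1) = -p`, one has `b_n = π ^ n a_n` with `exp (y + y ^ p / p) = ∑ a_n y ^ n`. By the
differential equation `θ' = π (1 - p t ^ (p - 1)) θ` the numbers `h_n = n! a_n` are integers with
`h_{n+1} = h_n + n (n - 1) ⋯ (n - p + 2) h_{n+1-p}`. The product of `p - 1` consecutive integers
occurring here is divisible by `p` if `p ∤ n + 1`, and is `-1` modulo `p` otherwise, by Wilson's
theorem. Hence `h` gains a factor `p` over every two blocks of `p` consecutive indices, so that
`p ^ ⌈q / 2⌉ ∣ h_n` for `q = ⌊n / p⌋`. As `p` is odd, `v_p(n!) = q + v_p(q!) ≤ q + ⌊q / 2⌋`, and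
therefore `‖b_n‖ ≤ ‖π‖ ^ n p ^ ⌊n / p⌋`. Finally `∑ ⌊c_i / p⌋ ≤ ⌊m / p⌋ < ñ`, whereas
`‖π ^ (r - ñ + m)‖ = ‖π ^ ((p - 1) ñ)‖ = p ^ (-ñ)`.
-/

namespace AHG

open PowerSeries Nat

section DifferentialEquation

theorem coeff_mul_expand {R : Type*} [CommRing R] {p : ℕ} (hp : p ≠ 0) (f g : R⟦X⟧) (n : ℕ) :
    coeff n (f * expand p hp g) =
      ∑ k ∈ Finset.range (n + 1), if p * k ≤ n then coeff (n - p * k) f * coeff k g else 0 := by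
  have hpos : 0 < p := Nat.pos_of_ne_zero hp
  simp only [mul_comm f, coeff_mul, Finset.Nat.sum_antidiagonal_eq_sum_range_succ_mk,
    coeff_expand, ite_mul, zero_mul]
  rw [← Finset.sum_filter, ← Finset.sum_filter]
  symm
  refine Finset.sum_nbij (p * ·) (fun k hk ↦ ?_) (mul_right_injective₀ hp).injOn
    (fun i hi ↦ ?_) fun k _ ↦ ?_
  · simp only [Finset.mem_filter, Finset.mem_range] at hk ⊢
    exact ⟨by omega, dvd_mul_right p k⟩
  · obtain ⟨hin, k, rfl⟩ := Finset.mem_filter.mp hi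
    have hle : k ≤ p * k := Nat.le_mul_of_pos_left k hpos
    rw [Finset.mem_range] at hin
    exact ⟨k, Finset.mem_filter.mpr ⟨Finset.mem_range.mpr (by omega), by omega⟩, rfl⟩
  · rw [Nat.mul_div_cancel_left k hpos, mul_comm]

theorem derivative_exp_subst {R : Type*} [CommRing R] [Algebra ℚ R] {g : R⟦X⟧}
    (hg : HasSubst g) : d⁄dX R ((exp R).subst g) = (exp R).subst g * d⁄dX R g := by
  rw [derivative_subst hg, derivative_exp]

variable {K : Type*} [Field K] [CharZero K] {p : ℕ}

theorem mk_dworkB (hp : p ≠ 0) (π : K) :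
    PowerSeries.mk (dworkB p π) =
      (exp K).subst (π • X : K⟦X⟧) * (exp K).subst (-π • X ^ p : K⟦X⟧) := by
  have hX : (exp K).subst (-π • X ^ p : K⟦X⟧) = expand p hp (rescale (-π) (exp K)) := by
    rw [expand_apply, rescale_eq_subst, subst_comp_subst_apply (.smul_X' _) (.X_pow hp),
      subst_smul (.X_pow hp), subst_X (.X_pow hp)]
  ext n
  rw [hX, ← rescale_eq_subst, coeff_mul_expand, coeff_mk, dworkB]
  refine Finset.sum_congr rfl fun k _ ↦ if_congr Iff.rfl ?_ rfl
  simp only [coeff_rescale, coeff_exp, map_div₀, map_one, map_natCast]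
  rw [neg_pow π, pow_add]
  field_simp

theorem derivative_mk_dworkB (hp : p ≠ 0) (π : K) :
    d⁄dX K (PowerSeries.mk (dworkB p π)) =
      (C π - C (p * π) * X ^ (p - 1)) * PowerSeries.mk (dworkB p π) := by
  rw [mk_dworkB hp, Derivation.leibniz, derivative_exp_subst (.smul_X' π),
    derivative_exp_subst ((HasSubst.X_pow hp).smul' _)]
  simp only [smul_eq_C_mul, neg_smul, map_neg, Derivation.leibniz, Derivation.leibniz_pow,
    derivative_X, smul_eq_mul, mul_one, nsmul_eq_mul, derivative_C, mul_zero, add_zero, mul_neg,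
    map_mul, map_natCast]
  ring

theorem succ_mul_dworkB_succ (hp : p ≠ 0) (π : K) (n : ℕ) :
    (n + 1) * dworkB p π (n + 1) =
      π * dworkB p π n - if p - 1 ≤ n then p * π * dworkB p π (n - (p - 1)) else 0 := by
  have h := congrArg (coeff n) (derivative_mk_dworkB hp π)
  rw [coeff_derivative, sub_mul, map_sub, mul_assoc (C _), coeff_C_mul, coeff_C_mul,
    coeff_X_pow_mul'] at h
  simp only [coeff_mk, mul_ite, mul_zero] at h
  rw [mul_comm, h]

end DifferentialEquation

/-- The integers `n! aₙ`, where `exp (y + y ^ p / p) = ∑ aₙ yⁿ`. For prime `p`, `dworkNumer p n` is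
the number of permutations of `n` letters with `σ ^ p = 1`, and the recurrence that defines it
distinguishes whether the last letter is fixed or lies in a `p`-cycle. The truncated subtraction is
harmless, since the descending factorial vanishes for `n < p - 1`. -/
def dworkNumer (p : ℕ) : ℕ → ℕ
  | 0 => 1
  | n + 1 => dworkNumer p n + n.descFactorial (p - 1) * dworkNumer p (n - (p - 1))
decreasing_by all_goals omega

theorem factorial_mul_dworkB {K : Type*} [Field K] [CharZero K] {p : ℕ} (hp : p ≠ 0) {π : K}
    (hπ : π ^ (p - 1) = -(p : K)) (n : ℕ) :
    (n ! : K) * dworkB p π n = π ^ n * dworkNumer p n := by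
  induction n using Nat.strong_induction_on with
  | _ n ih =>
  cases n with
  | zero => simp [dworkB, dworkNumer]
  | succ n =>
    have hrec := succ_mul_dworkB_succ hp π n
    have hn := ih n n.lt_succ_self
    rw [Nat.factorial_succ, dworkNumer]
    push_cast
    split_ifs at hrec with hpn
    · have hlow := ih (n - (p - 1)) (by omega)
      have hfac : (n ! : K) = (n - (p - 1))! * n.descFactorial (p - 1) := by
        exact_mod_cast (Nat.factorial_mul_descFactorial hpn).symm
      have hpow : π ^ n = π ^ (n - (p - 1)) * -(p : K) := by
        rw [← hπ, ← pow_add, Nat.sub_add_cancel hpn]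
      calc ((n : K) + 1) * n ! * dworkB p π (n + 1)
          = π * (n ! * dworkB p π n) - p * π * n.descFactorial (p - 1) *
              ((n - (p - 1))! * dworkB p π (n - (p - 1))) := by
            linear_combination (n ! : K) * hrec - p * π * dworkB p π (n - (p - 1)) * hfac
        _ = π ^ (n + 1) * (dworkNumer p n +
              n.descFactorial (p - 1) * dworkNumer p (n - (p - 1))) := by
            rw [hn, hlow, pow_succ]
            linear_combination
              -π * n.descFactorial (p - 1) * dworkNumer p (n - (p - 1)) * hpow
    · rw [Nat.descFactorial_of_lt (not_le.mp hpn)]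
      linear_combination (n ! : K) * hrec + π * hn

section Divisibility

variable {p : ℕ} [Fact p.Prime]

theorem dvd_descFactorial_sub_one {n : ℕ} (hn : ¬ p ∣ n + 1) : p ∣ n.descFactorial (p - 1) := by
  have hp : p.Prime := Fact.out
  have h : p ∣ (n + 1) * n.descFactorial (p - 1) := by
    rw [← Nat.succ_descFactorial_succ, Nat.sub_add_cancel hp.one_le]
    exact (Nat.dvd_factorial hp.pos le_rfl).trans (Nat.factorial_dvd_descFactorial _ _)
  exact (hp.dvd_mul.mp h).resolve_left hn

theorem dvd_descFactorial_sub_one_add_one {n : ℕ} (hn : p ∣ n + 1) :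
    p ∣ n.descFactorial (p - 1) + 1 := by
  have hcast : (n : ZMod p) = (p - 1 : ℕ) := by
    have hzero := (ZMod.natCast_eq_zero_iff (n + 1) p).mpr hn
    rw [Nat.cast_pred (Fact.out : p.Prime).pos, CharP.cast_eq_zero (ZMod p) p, zero_sub]
    push_cast at hzero
    exact eq_neg_of_add_eq_zero_left hzero
  rw [← ZMod.natCast_eq_zero_iff, Nat.cast_succ, ← descPochhammer_eval_eq_descFactorial, hcast,
    descPochhammer_eval_eq_descFactorial, Nat.descFactorial_self, ZMod.wilsons_lemma,
    neg_add_cancel]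

theorem dworkNumer_modEq_of_pow_dvd {e q : ℕ}
    (hdvd : ∀ m, m / p + 1 = q → p ^ e ∣ dworkNumer p m) {s : ℕ} (hs : s < p) :
    dworkNumer p (p * q + s) ≡ dworkNumer p (p * q) [MOD p ^ (e + 1)] := by
  induction s with
  | zero => rfl
  | succ s ih =>
    refine Nat.ModEq.trans ?_ (ih (by omega))
    rw [← add_assoc, dworkNumer, Nat.add_modEq_left_iff, pow_succ']
    cases q with
    | zero =>
      rw [Nat.descFactorial_of_lt (by omega), zero_mul]
      exact dvd_zero _
    | succ q =>
      have hndvd : ¬ p ∣ p * (q + 1) + s + 1 := by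
        rw [add_assoc, Nat.dvd_add_right (dvd_mul_right p (q + 1))]
        exact Nat.not_dvd_of_pos_of_lt s.succ_pos hs
      have hprev : p * (q + 1) + s - (p - 1) = p * q + (s + 1) := by rw [mul_add]; omega
      have hdiv : (p * q + (s + 1)) / p = q := by
        rw [Nat.mul_add_div (by omega), Nat.div_eq_of_lt hs, add_zero]
      rw [hprev]
      exact mul_dvd_mul (dvd_descFactorial_sub_one hndvd) (hdvd _ (by rw [hdiv]))

theorem pow_succ_dvd_dworkNumer_mul_succ {e q : ℕ} (hdvd : p ^ e ∣ dworkNumer p (p * q))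
    (hmod : dworkNumer p (p * q + (p - 1)) ≡ dworkNumer p (p * q) [MOD p ^ (e + 1)]) :
    p ^ (e + 1) ∣ dworkNumer p (p * (q + 1)) := by
  have hsucc : p * (q + 1) = p * q + (p - 1) + 1 := by
    rw [mul_add, mul_one, add_assoc, Nat.sub_add_cancel (Fact.out : p.Prime).one_le]
  have hwilson : p ∣ (p * q + (p - 1)).descFactorial (p - 1) + 1 :=
    dvd_descFactorial_sub_one_add_one (hsucc ▸ dvd_mul_right p (q + 1))
  rw [hsucc, dworkNumer, Nat.add_sub_cancel, (hmod.add_right _).dvd_iff dvd_rfl, ← one_add_mul,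
    add_comm 1, pow_succ']
  exact mul_dvd_mul hwilson hdvd

theorem pow_dvd_dworkNumer (n : ℕ) : p ^ ((n / p + 1) / 2) ∣ dworkNumer p n := by
  have hp : p.Prime := Fact.out
  generalize hq : n / p = q
  induction q using Nat.strong_induction_on generalizing n with
  | _ q ih =>
  cases q with
  | zero => simp
  | succ q =>
    have hlow (m : ℕ) (hle : m / p ≤ q) (hge : q ≤ m / p + 1) : p ^ (q / 2) ∣ dworkNumer p m :=
      (pow_dvd_pow p (by omega)).trans (ih (m / p) (by omega) m rfl)
    have hstart : p ^ (q / 2 + 1) ∣ dworkNumer p (p * (q + 1)) := by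
      have hdiv : p * q / p = q := Nat.mul_div_cancel_left q hp.pos
      refine pow_succ_dvd_dworkNumer_mul_succ (hlow _ (by omega) (by omega)) ?_
      exact dworkNumer_modEq_of_pow_dvd (fun m hm ↦ hlow m (by omega) (by omega))
        (Nat.sub_one_lt hp.ne_zero)
    have hmod := dworkNumer_modEq_of_pow_dvd (p := p) (e := q / 2) (q := q + 1)
      (fun m hm ↦ hlow m (by omega) (by omega)) (Nat.mod_lt n hp.pos)
    rw [← hq, Nat.div_add_mod] at hmod
    rw [show (q + 1 + 1) / 2 = q / 2 + 1 by omega, hmod.dvd_iff dvd_rfl, hq]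
    exact hstart

end Divisibility

section Norm

variable {p : ℕ} [Fact p.Prime]

theorem padicValNat_factorial_le (hp2 : p ≠ 2) (n : ℕ) :
    padicValNat p n ! ≤ n / p + n / p / 2 := by
  have hp1 : 2 ≤ p - 1 := by have := (Fact.out : p.Prime).two_le; omega
  have h : 2 * padicValNat p (n / p)! ≤ n / p :=
    calc
      2 * padicValNat p (n / p)! ≤ (p - 1) * padicValNat p (n / p)! := Nat.mul_le_mul_right _ hp1
      _ ≤ n / p := (sub_one_mul_padicValNat_factorial (n / p)).trans_le (Nat.sub_le _ _)
  rw [← padicValNat_mul_div_factorial, padicValNat_factorial_mul]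
  omega

theorem norm_dworkNumer_le (hp2 : p ≠ 2) (n : ℕ) :
    ‖(dworkNumer p n : ℚ_[p])‖ ≤ p ^ (n / p) * ‖(n ! : ℚ_[p])‖ := by
  have hp : (1 : ℝ) < p := mod_cast (Fact.out : p.Prime).one_lt
  have hval := padicValNat_factorial_le hp2 n
  calc ‖(dworkNumer p n : ℚ_[p])‖
      ≤ (p : ℝ) ^ (-((n / p + 1) / 2 : ℕ) : ℤ) := by
        have := (Padic.norm_int_le_pow_iff_dvd (p := p) (dworkNumer p n) ((n / p + 1) / 2)).mpr
          (mod_cast pow_dvd_dworkNumer n)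
        exact_mod_cast this
    _ ≤ (p : ℝ) ^ ((n / p : ℕ) + -(padicValNat p n ! : ℤ)) :=
        zpow_le_zpow_right₀ hp.le (by omega)
    _ = p ^ (n / p) * ‖(n ! : ℚ_[p])‖ := by
        rw [zpow_add₀ (by positivity), zpow_natCast, Padic.norm_eq_zpow_neg_valuation
          (mod_cast n.factorial_ne_zero), Padic.valuation_natCast]

variable {K : Type*} [NormedField K] [NormedAlgebra ℚ_[p] K]

theorem norm_natCast_eq_norm_padic (n : ℕ) : ‖(n : K)‖ = ‖(n : ℚ_[p])‖ := by
  rw [← map_natCast (algebraMap ℚ_[p] K), norm_algebraMap']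

theorem norm_dworkB_le (hp2 : p ≠ 2) {π : K} (hπ : π ^ (p - 1) = -(p : K)) (n : ℕ) :
    ‖dworkB p π n‖ ≤ ‖π‖ ^ n * p ^ (n / p) := by
  have : CharZero K := charZero_of_injective_algebraMap (algebraMap ℚ_[p] K).injective
  have hfac : 0 < ‖(n ! : K)‖ := norm_pos_iff.mpr (mod_cast n.factorial_ne_zero)
  refine le_of_mul_le_mul_left ?_ hfac
  calc ‖(n ! : K)‖ * ‖dworkB p π n‖
      = ‖π‖ ^ n * ‖(dworkNumer p n : ℚ_[p])‖ := by
        rw [← norm_mul, factorial_mul_dworkB (Fact.out : p.Prime).ne_zero hπ, norm_mul, norm_pow,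
          norm_natCast_eq_norm_padic (p := p)]
    _ ≤ ‖π‖ ^ n * (p ^ (n / p) * ‖(n ! : ℚ_[p])‖) := by
        gcongr
        exact norm_dworkNumer_le hp2 n
    _ = ‖(n ! : K)‖ * (‖π‖ ^ n * p ^ (n / p)) := by
        rw [norm_natCast_eq_norm_padic (p := p) (K := K)]
        ring

theorem norm_prod_dworkB_le (hp2 : p ≠ 2) {π : K} (hπ : π ^ (p - 1) = -(p : K)) {ι : Type*}
    (s : Finset ι) (c : ι → ℕ) :
    ‖∏ i ∈ s, dworkB p π (c i)‖ ≤ ‖π‖ ^ (∑ i ∈ s, c i) * p ^ ((∑ i ∈ s, c i) / p) := by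
  have hp : p.Prime := Fact.out
  have hfloor : ∑ i ∈ s, c i / p ≤ (∑ i ∈ s, c i) / p := by
    rw [Nat.le_div_iff_mul_le hp.pos, Finset.sum_mul]
    exact Finset.sum_le_sum fun i _ ↦ Nat.div_mul_le_self (c i) p
  calc ‖∏ i ∈ s, dworkB p π (c i)‖ ≤ ∏ i ∈ s, ‖π‖ ^ c i * (p : ℝ) ^ (c i / p) := by
        rw [norm_prod]
        exact Finset.prod_le_prod (fun i _ ↦ norm_nonneg _) fun i _ ↦ norm_dworkB_le hp2 hπ (c i)
    _ = ‖π‖ ^ (∑ i ∈ s, c i) * p ^ (∑ i ∈ s, c i / p) := by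
        rw [Finset.prod_mul_distrib, Finset.prod_pow_eq_pow_sum, Finset.prod_pow_eq_pow_sum]
    _ ≤ ‖π‖ ^ (∑ i ∈ s, c i) * p ^ ((∑ i ∈ s, c i) / p) := by
        gcongr
        exact mod_cast hp.one_le

theorem norm_pow_sub_one_eq_inv {π : K} (hπ : π ^ (p - 1) = -(p : K)) :
    ‖π‖ ^ (p - 1) = (p : ℝ)⁻¹ := by
  rw [← norm_pow, hπ, norm_neg, norm_natCast_eq_norm_padic (p := p), Padic.norm_p]

end Norm

end AHG

theorem stmt_5_general (p : ℕ) [Fact p.Prime] (hp2 : p ≠ 2)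
    {K : Type*} [NormedField K] [NormedAlgebra ℚ_[p] K]
    (π : K) (hπ : π ^ (p - 1) = -(p : K))
    (m r nt : ℕ) (hr : 1 ≤ r) (hm : (m : ℤ) = p * nt - r)
    {ι : Type*} (s : Finset ι) (c : ι → ℕ) (hc : ∑ i ∈ s, c i = m) :
    ‖π ^ ((r : ℤ) - (nt : ℤ)) * ∏ i ∈ s, AHG.dworkB p π (c i)‖ ≤ (p : ℝ)⁻¹ := by
  have hp : p.Prime := Fact.out
  have hp1 : (1 : ℝ) ≤ p := mod_cast hp.one_le
  have hp0 : (p : ℝ) ≠ 0 := by positivity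
  have hπnorm : ‖π‖ ^ (p - 1) = (p : ℝ)⁻¹ := AHG.norm_pow_sub_one_eq_inv hπ
  have hπ0 : ‖π‖ ≠ 0 := ne_zero_pow (Nat.sub_ne_zero_of_lt hp.one_lt) (by simp [hπnorm, hp0])
  have hexp : (r : ℤ) - nt + m = ((p - 1) * nt : ℕ) := by
    rw [hm, Nat.cast_mul, Nat.cast_pred hp.pos]
    ring
  have hfloor : m / p + 1 ≤ nt := Nat.div_lt_of_lt_mul (by zify; omega)
  calc ‖π ^ ((r : ℤ) - nt) * ∏ i ∈ s, AHG.dworkB p π (c i)‖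
      ≤ ‖π‖ ^ ((r : ℤ) - nt) * (‖π‖ ^ m * p ^ (m / p)) := by
        rw [norm_mul, norm_zpow, ← hc]
        gcongr
        exact AHG.norm_prod_dworkB_le hp2 hπ s c
    _ = (p : ℝ)⁻¹ ^ nt * p ^ (m / p) := by
        rw [← mul_assoc, ← zpow_natCast ‖π‖ m, ← zpow_add₀ hπ0, hexp, zpow_natCast, pow_mul, hπnorm]
    _ ≤ (p : ℝ)⁻¹ ^ (m / p + 1) * p ^ (m / p) := by
        gcongr ?_ * _
        exact pow_le_pow_of_le_one (by positivity) (inv_le_one_of_one_le₀ hp1) hfloor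
    _ = (p : ℝ)⁻¹ := by
        rw [pow_succ, mul_right_comm, ← mul_pow, inv_mul_cancel₀ hp0, one_pow, one_mul]

/-- if `ñ ≥ 1`, `r ≥ 1`, `m ≥ 0`, `m = pñ - r` and `c_1 + ⋯ + c_k = m`,
then `‖π^{r-ñ} b_{c_1} ⋯ b_{c_k}‖ ≤ 1/p`. -/
theorem stmt_5 (p : ℕ) [Fact p.Prime] (hp2 : p ≠ 2)
    {K : Type*} [NormedField K] [IsUltrametricDist K] [CompleteSpace K] [IsAlgClosed K]
    (ι : ℚ_[p] →+* K) (hι : ∀ x, ‖ι x‖ = ‖x‖)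
    (π : K) (hπ : π ^ (p - 1) = -(p : K))
    (m r nt : ℕ) (hnt : 1 ≤ nt) (hr : 1 ≤ r) (hm : (m : ℤ) = p * nt - r)
    (k : ℕ) (hk : 1 ≤ k) (c : Fin k → ℕ) (hc : ∑ i, c i = m) :
    ‖π ^ ((r : ℤ) - (nt : ℤ)) * ∏ i, AHG.dworkB p π (c i)‖ ≤ (p : ℝ)⁻¹ := by
  let _ : NormedAlgebra ℚ_[p] K :=
    { ι.toAlgebra with norm_smul_le := fun x y ↦ ((norm_mul (ι x) y).trans (by rw [hι])).le }
  exact stmt_5_general p hp2 π hπ m r nt hr hm Finset.univ c hc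
end

section
/- There exists a constant C ∈ (0,1), depending only on p, with the following property: for all integers m, r, ñ with ñ ≥ 2, r ≥ 1, m ≥ 0 and m = p·ñ − r, and for every k ≥ 1 and every tuple (c_1,…,c_k) ∈ (ℤ_{≥0})^k with c_1+⋯+c_k = m, one has ‖π^{r−ñ} · b_{c_1}·b_{c_2}⋯b_{c_k}‖ ≤ C·(1/p). -/
open scoped BigOperators Classical

open scoped BigOperators Classical

/-!
As `π ^ (p - 1) = -p`, the substitution `x = π t` turns `θ(t)` into `exp (x + x ^ p / p)`, a series
with rational coefficients. It is the product of the Artin–Hasse exponential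
`exp (∑ⱼ x ^ (p ^ j) / p ^ j)` and `exp (-∑_{j ≥ 2} x ^ (p ^ j) / p ^ j)`. The first factor `F` has
coefficients in `ℤ_p`, by Dwork's lemma: `F(x) ^ p = F(x ^ p) * exp (p x)`, and `exp (p x)` is
congruent to `1` modulo `p`. The second factor is a series in `x ^ (p ^ 2)`, so its `n`-th
coefficient is bounded by a power of `‖π‖⁻¹` that depends only on `⌊n / p ^ 2⌋`. Explicitly
`‖b_n‖ ≤ ‖π‖ ^ (n - (2p - 1) ⌊n / p ^ 2⌋)`, and this bound is supermultiplicative in `n`, so that it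
passes to the product of the `b_{c_i}`. For `p ≥ 3` the bound is at most `‖π‖ ^ p = ‖π‖ / p` once
`π ^ (r - ñ)` is included, which gives `C = ‖π‖`.
-/

namespace Dwork

open PowerSeries

section FormalExp

variable {A : Type*} [CommRing A]

lemma coeff_mul_expand {q : ℕ} (hq : q ≠ 0) (f g : A⟦X⟧) (n : ℕ) :
    coeff n (f * expand q hq g) =
      ∑ k ∈ Finset.range (n + 1), if q * k ≤ n then coeff (n - q * k) f * coeff k g else 0 := by
  rw [mul_comm, coeff_mul, Finset.Nat.sum_antidiagonal_eq_sum_range_succ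
    (fun i j => coeff i (expand q hq g) * coeff j f), ← Finset.sum_filter]
  symm
  refine Finset.sum_of_injOn (q * ·) ((mul_right_injective₀ hq).injOn) ?_ ?_ ?_
  · intro k hk
    simp_all
  · intro i hi hik
    rw [coeff_expand_of_not_dvd, zero_mul]
    rintro ⟨k, rfl⟩
    have hk : k ≤ q * k := Nat.le_mul_of_pos_left k (Nat.pos_of_ne_zero hq)
    simp_all only [Finset.mem_range, Finset.coe_filter, Set.mem_image, Set.mem_ofPred_eq]
    exact hik ⟨k, by omega, rfl⟩
  · intro k _
    rw [coeff_expand_mul, mul_comm]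

lemma coeff_pow_sub_pow {f g : A⟦X⟧} {n : ℕ} (hn : n ≠ 0) (hfg : X ^ n ∣ f - g)
    (hf : constantCoeff f = 1) (m : ℕ) :
    coeff n (f ^ m - g ^ m) = m * coeff n (f - g) := by
  obtain ⟨h, hfg⟩ := hfg
  have hg : constantCoeff g = 1 := by
    have := congrArg constantCoeff hfg
    rw [map_sub, hf, map_mul, map_pow, constantCoeff_X, zero_pow hn, zero_mul, sub_eq_zero] at this
    exact this.symm
  rw [← (Commute.all f g).geom_sum₂_mul m, hfg, mul_left_comm, coeff_X_pow_mul', coeff_X_pow_mul']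
  simp [hf, hg]

variable [Algebra ℚ A]

lemma constantCoeff_exp_subst {f : A⟦X⟧} (hf : constantCoeff f = 0) :
    constantCoeff ((exp A).subst f) = 1 := by
  have hs := HasSubst.of_constantCoeff_zero' hf
  have h := constantCoeff_subst_eq_zero (a := f) hf (exp A - 1) (by simp)
  rw [subst_sub hs, ← coe_substAlgHom hs, map_one, coe_substAlgHom hs, map_sub, map_one,
    sub_eq_zero] at h
  exact h

lemma derivative_exp_subst {f : A⟦X⟧} (hf : constantCoeff f = 0) :
    d⁄dX A ((exp A).subst f) = (exp A).subst f * d⁄dX A f := by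
  rw [derivative_subst (HasSubst.of_constantCoeff_zero' hf), derivative_exp]

lemma exp_subst_add {f g : A⟦X⟧} (hf : constantCoeff f = 0) (hg : constantCoeff g = 0) :
    (exp A).subst (f + g) = (exp A).subst f * (exp A).subst g := by
  have := IsAddTorsionFree.of_module_rat A
  have hfg : constantCoeff (f + g) = 0 := by rw [map_add, hf, hg, add_zero]
  have hconst : constantCoeff ((exp A).subst f * (exp A).subst g) = 1 := by
    rw [map_mul, constantCoeff_exp_subst hf, constantCoeff_exp_subst hg, one_mul]
  obtain ⟨u, hu⟩ : IsUnit ((exp A).subst f * (exp A).subst g) := by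
    rw [isUnit_iff_constantCoeff, hconst]
    exact isUnit_one
  have hu' : d⁄dX A (u : A⟦X⟧) = u * d⁄dX A (f + g) := by
    rw [hu, Derivation.leibniz, derivative_exp_subst hf, derivative_exp_subst hg, map_add]
    simp only [smul_eq_mul]
    ring
  have huinv : constantCoeff ((u⁻¹ : A⟦X⟧ˣ) : A⟦X⟧) = 1 := by
    have := congrArg constantCoeff u.mul_inv
    rwa [map_mul, hu, hconst, one_mul, map_one] at this
  suffices (exp A).subst (f + g) * ((u⁻¹ : A⟦X⟧ˣ) : A⟦X⟧) = 1 by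
    rw [← hu, ← Units.mul_inv_eq_one, this]
  apply derivative.ext
  · rw [Derivation.leibniz, derivative_inv, derivative_exp_subst hfg, hu', derivative_one]
    simp only [smul_eq_mul]
    linear_combination (-(exp A).subst (f + g) * ((u⁻¹ : A⟦X⟧ˣ) : A⟦X⟧) * d⁄dX A (f + g)) *
      u.inv_mul
  · rw [map_mul, constantCoeff_exp_subst hfg, huinv, one_mul, map_one]

lemma exp_subst_nsmul {f : A⟦X⟧} (hf : constantCoeff f = 0) (n : ℕ) :
    (exp A).subst (n • f) = (exp A).subst f ^ n := by
  induction n with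
  | zero => simp [subst_zero_eq_C_constantCoeff]
  | succ n ih =>
    rw [succ_nsmul, exp_subst_add (by rw [map_nsmul, hf, nsmul_zero]) hf, ih, pow_succ]

lemma exp_subst_smul_X (a : A) : (exp A).subst (a • X : A⟦X⟧) = rescale a (exp A) :=
  (rescale_eq_subst a (exp A)).symm

lemma expand_exp_subst {q : ℕ} (hq : q ≠ 0) {f : A⟦X⟧} (hf : constantCoeff f = 0) :
    expand q hq ((exp A).subst f) = (exp A).subst (expand q hq f) :=
  expand_subst _ hq (HasSubst.of_constantCoeff_zero' hf) _

end FormalExp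

section UltrametricBounds

variable {K : Type*} [NormedField K] [IsUltrametricDist K] {w : ℕ → ℝ}

lemma norm_coeff_mul_le (hw : ∀ i j, w i * w j ≤ w (i + j)) {a b : ℝ} (ha : 0 ≤ a) (hb : 0 ≤ b)
    {f g : K⟦X⟧} {n : ℕ} (hf : ∀ i ≤ n, ‖coeff i f‖ ≤ a * w i)
    (hg : ∀ i ≤ n, ‖coeff i g‖ ≤ b * w i) :
    ‖coeff n (f * g)‖ ≤ a * b * w n := by
  rw [coeff_mul]
  refine IsUltrametricDist.norm_sum_le_of_forall_le_of_nonempty ⟨(0, n), by simp⟩ ?_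
  rintro ⟨i, j⟩ hij
  obtain rfl : i + j = n := Finset.HasAntidiagonal.mem_antidiagonal.mp hij
  have hfi := hf i (Nat.le_add_right i j)
  calc ‖coeff i f * coeff j g‖ = ‖coeff i f‖ * ‖coeff j g‖ := norm_mul _ _
    _ ≤ (a * w i) * (b * w j) :=
      mul_le_mul hfi (hg j (Nat.le_add_left j i)) (norm_nonneg _) ((norm_nonneg _).trans hfi)
    _ = a * b * (w i * w j) := mul_mul_mul_comm _ _ _ _
    _ ≤ a * b * w (i + j) := mul_le_mul_of_nonneg_left (hw i j) (mul_nonneg ha hb)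

lemma norm_coeff_expand_mul_le {q n : ℕ} (hq : 1 < q) (hn : n ≠ 0) {ε : ℝ} (hε : 0 ≤ ε)
    {f g : K⟦X⟧} (hf : ∀ i < n, ‖coeff i f‖ ≤ 1) (hg : ∀ i, ‖coeff i g‖ ≤ ε) :
    ‖coeff n (expand q (by omega) f * g)‖ ≤ ε := by
  have hexpand : ∀ i ≤ n, ‖coeff i (expand q (by omega) f)‖ ≤ 1 := fun i hi => by
    rw [coeff_expand]
    split_ifs
    · exact hf _ ((Nat.div_le_div_right hi).trans_lt (Nat.div_lt_self (Nat.pos_of_ne_zero hn) hq))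
    · rw [norm_zero]; exact zero_le_one
  simpa using norm_coeff_mul_le (w := fun _ => 1) (fun _ _ => (one_mul 1).le) zero_le_one hε
    (by simpa using hexpand) (fun i _ => by simpa using hg i)

lemma norm_coeff_pow_le (hw : ∀ i j, w i * w j ≤ w (i + j)) (hw_one : ∀ i, 1 ≤ w i) {a : ℝ}
    (ha : 0 ≤ a) {f : K⟦X⟧} (hf : ∀ i, ‖coeff i f‖ ≤ a * w i) (k n : ℕ) :
    ‖coeff n (f ^ k)‖ ≤ a ^ k * w n := by
  induction k generalizing n with
  | zero =>
    rw [pow_zero, pow_zero, one_mul, coeff_one]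
    split_ifs
    · rw [norm_one]; exact hw_one n
    · rw [norm_zero]; exact zero_le_one.trans (hw_one n)
  | succ k ih =>
    rw [pow_succ, pow_succ]
    exact norm_coeff_mul_le hw (pow_nonneg ha k) ha (fun i _ => ih i) (fun i _ => hf i)

lemma norm_coeff_subst_le (hw : ∀ i j, w i * w j ≤ w (i + j)) (hw_one : ∀ i, 1 ≤ w i) {ρ : ℝ}
    (hρ : 0 ≤ ρ) {f g : K⟦X⟧} (hg_const : constantCoeff g = 0)
    (hf : ∀ k, ‖coeff k f‖ * ρ ^ k ≤ 1) (hg : ∀ i, ‖coeff i g‖ ≤ ρ * w i) (n : ℕ) :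
    ‖coeff n (f.subst g)‖ ≤ w n := by
  have hw_nonneg : 0 ≤ w n := zero_le_one.trans (hw_one n)
  rw [coeff_subst' (HasSubst.of_constantCoeff_zero' hg_const)]
  refine finsum_induction (‖·‖ ≤ w n) (by rwa [norm_zero])
    (fun x y hx hy => (IsUltrametricDist.norm_add_le_max x y).trans (max_le hx hy)) fun k => ?_
  calc ‖coeff k f • coeff n (g ^ k)‖ = ‖coeff k f‖ * ‖coeff n (g ^ k)‖ := norm_smul _ _
    _ ≤ ‖coeff k f‖ * (ρ ^ k * w n) :=
      mul_le_mul_of_nonneg_left (norm_coeff_pow_le hw hw_one hρ hg k n) (norm_nonneg _)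
    _ = ‖coeff k f‖ * ρ ^ k * w n := (mul_assoc _ _ _).symm
    _ ≤ w n := mul_le_of_le_one_left hw_nonneg (hf k)

end UltrametricBounds

section Padic

/-- The radius of convergence `p ^ (-1 / (p - 1))` of the `p`-adic exponential; it is the norm of
Dwork's constant `π`. -/
noncomputable def expRadius (p : ℕ) : ℝ := (p : ℝ) ^ (-1 / ((p : ℝ) - 1))

variable (p : ℕ) [hp : Fact p.Prime]

lemma expRadius_pow : expRadius p ^ (p - 1) = (p : ℝ)⁻¹ := by
  have hp1 : (1 : ℝ) < p := mod_cast hp.out.one_lt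
  rw [expRadius, ← Real.rpow_natCast, ← Real.rpow_mul (Nat.cast_nonneg p),
    Nat.cast_sub hp.out.one_le, Nat.cast_one, div_mul_cancel₀ _ (sub_pos.mpr hp1).ne',
    Real.rpow_neg_one]

lemma expRadius_pos : 0 < expRadius p :=
  Real.rpow_pos_of_pos (mod_cast hp.out.pos) _

lemma expRadius_lt_one : expRadius p < 1 := by
  have hp1 : (1 : ℝ) < p := mod_cast hp.out.one_lt
  exact Real.rpow_lt_one_of_one_lt_of_neg hp1
    (div_neg_of_neg_of_pos (by norm_num) (sub_pos.mpr hp1))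

lemma one_lt_inv_expRadius : 1 < (expRadius p)⁻¹ :=
  (one_lt_inv₀ (expRadius_pos p)).mpr (expRadius_lt_one p)

lemma inv_expRadius_pow : (expRadius p)⁻¹ ^ (p - 1) = p := by
  rw [inv_pow, expRadius_pow, inv_inv]

variable {p}

lemma norm_eq_expRadius {K : Type*} [NormedField K] (hpK : ‖(p : K)‖ = (p : ℝ)⁻¹) {π : K}
    (hπ : π ^ (p - 1) = -(p : K)) : ‖π‖ = expRadius p := by
  rw [← pow_left_inj₀ (norm_nonneg π) (expRadius_pos p).le (Nat.sub_pos_of_lt hp.out.one_lt).ne',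
    expRadius_pow, ← norm_pow, hπ, norm_neg, hpK]

lemma norm_natCast_factorial (n : ℕ) :
    ‖((n.factorial : ℕ) : ℚ_[p])‖ = (p : ℝ)⁻¹ ^ padicValNat p n.factorial := by
  rw [Padic.norm_eq_zpow_neg_valuation (mod_cast n.factorial_ne_zero), Padic.valuation_natCast,
    zpow_neg, zpow_natCast, inv_pow]

lemma expRadius_pow_le_norm_factorial (n : ℕ) :
    expRadius p ^ n ≤ ‖((n.factorial : ℕ) : ℚ_[p])‖ := by
  have hval : (p - 1) * padicValNat p n.factorial ≤ n :=
    (sub_one_mul_padicValNat_factorial n).trans_le (Nat.sub_le _ _)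
  calc expRadius p ^ n ≤ expRadius p ^ ((p - 1) * padicValNat p n.factorial) :=
        pow_le_pow_of_le_one (expRadius_pos p).le (expRadius_lt_one p).le hval
    _ = ‖((n.factorial : ℕ) : ℚ_[p])‖ := by rw [pow_mul, expRadius_pow, norm_natCast_factorial]

lemma norm_coeff_exp (n : ℕ) : ‖coeff n (exp ℚ_[p])‖ = ‖((n.factorial : ℕ) : ℚ_[p])‖⁻¹ := by
  rw [coeff_exp, map_div₀, map_one, map_natCast, one_div, norm_inv]

lemma norm_coeff_exp_mul_expRadius_pow_le (n : ℕ) :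
    ‖coeff n (exp ℚ_[p])‖ * expRadius p ^ n ≤ 1 := by
  have hpos := (pow_pos (expRadius_pos p) n).trans_le (expRadius_pow_le_norm_factorial n)
  rw [norm_coeff_exp, inv_mul_le_one₀ hpos]
  exact expRadius_pow_le_norm_factorial n

lemma norm_coeff_rescale_exp_le {n : ℕ} (hn : n ≠ 0) :
    ‖coeff n (rescale (p : ℚ_[p]) (exp ℚ_[p]))‖ ≤ (p : ℝ)⁻¹ := by
  have hp0 : (0 : ℝ) < (p : ℝ)⁻¹ := inv_pos.mpr (mod_cast hp.out.pos)
  have hp1 : (p : ℝ)⁻¹ ≤ 1 := inv_le_one_of_one_le₀ (mod_cast hp.out.one_le)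
  have hval : padicValNat p n.factorial + 1 ≤ n := padicValNat_factorial_lt_of_ne_zero p hn
  rw [coeff_rescale, norm_mul, norm_pow, Padic.norm_p, norm_coeff_exp, norm_natCast_factorial,
    ← div_eq_mul_inv, div_le_iff₀ (pow_pos hp0 _), ← pow_succ']
  exact pow_le_pow_of_le_one hp0.le hp1 hval

lemma norm_coeff_expand_sub_pow_le (f : ℤ_[p]⟦X⟧) (n : ℕ) :
    ‖coeff n (expand p hp.out.ne_zero f - f ^ p)‖ ≤ (p : ℝ)⁻¹ := by
  have hfrob : (f.map PadicInt.toZMod) ^ p =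
      expand p hp.out.ne_zero (f.map (PadicInt.toZMod (p := p))) := by
    have := MvPowerSeries.map_frobenius_expand p hp.out.ne_zero (f := f.map PadicInt.toZMod)
    rw [ZMod.frobenius_zmod, MvPowerSeries.map_id] at this
    exact this.symm
  have h : PadicInt.toZMod (coeff n (expand p hp.out.ne_zero f - f ^ p)) = 0 := by
    rw [← coeff_map, map_sub, map_expand, map_pow, hfrob, sub_self, map_zero]
  rw [← RingHom.mem_ker, PadicInt.ker_toZMod, PadicInt.maximalIdeal_eq_span_p,
    ← pow_one (Ideal.span _), Ideal.span_singleton_pow] at h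
  simpa using (PadicInt.norm_le_pow_iff_mem_span_pow _ 1).mpr h

lemma exists_X_pow_dvd_sub_map_coe {F : ℚ_[p]⟦X⟧} {n : ℕ} (hF : ∀ i < n, ‖coeff i F‖ ≤ 1) :
    ∃ f : ℤ_[p]⟦X⟧, X ^ n ∣ F - f.map PadicInt.Coe.ringHom := by
  have hlift : ∀ i, ∃ a : ℤ_[p], i < n → PadicInt.Coe.ringHom a = coeff i F := fun i =>
    if hi : i < n then ⟨⟨coeff i F, hF i hi⟩, fun _ => rfl⟩ else ⟨0, fun h => absurd h hi⟩
  choose a ha using hlift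
  refine ⟨PowerSeries.mk a, X_pow_dvd_iff.mpr fun i hi => ?_⟩
  rw [map_sub, coeff_map, coeff_mk, ha i hi, sub_self]

lemma coeff_expand_eq_zero_of_X_pow_dvd {A : Type*} [CommRing A] {q n : ℕ} (hq : 1 < q)
    (hn : n ≠ 0) {f : A⟦X⟧} (hf : X ^ n ∣ f) : coeff n (expand q (by omega) f) = 0 := by
  have h := map_dvd (expand q (by omega)) hf
  rw [map_pow, expand_X, ← pow_mul] at h
  exact X_pow_dvd_iff.mp h n (lt_mul_of_one_lt_left (Nat.pos_of_ne_zero hn) hq)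

lemma norm_coeff_le_one_of_pow_eq_expand_mul {F H : ℚ_[p]⟦X⟧} (hF : constantCoeff F = 1)
    (hFH : F ^ p = expand p hp.out.ne_zero F * H)
    (hH : ∀ n ≠ 0, ‖coeff n H‖ ≤ (p : ℝ)⁻¹) (n : ℕ) : ‖coeff n F‖ ≤ 1 := by
  have hp0 : (0 : ℝ) < (p : ℝ)⁻¹ := inv_pos.mpr (mod_cast hp.out.pos)
  have hH_one : constantCoeff H = 1 := by
    have := congrArg constantCoeff hFH
    rwa [map_pow, map_mul, constantCoeff_expand, hF, one_pow, one_mul, eq_comm] at this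
  induction n using Nat.strong_induction_on with
  | _ n ih =>
  rcases eq_or_ne n 0 with rfl | hn
  · rw [coeff_zero_eq_constantCoeff_apply, hF, norm_one]
  obtain ⟨f, hf⟩ := exists_X_pow_dvd_sub_map_coe ih
  set φ : ℤ_[p] →+* ℚ_[p] := PadicInt.Coe.ringHom
  have hsplit : p * coeff n (F - f.map φ) =
      coeff n (expand p hp.out.ne_zero F * (H - 1)) +
        φ (coeff n (expand p hp.out.ne_zero f - f ^ p)) := by
    have hexp := coeff_expand_eq_zero_of_X_pow_dvd hp.out.one_lt hn hf
    rw [map_sub, map_sub, sub_eq_zero] at hexp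
    rw [← coeff_pow_sub_pow hn hf hF, hFH, ← coeff_map, map_sub (PowerSeries.map φ), map_expand,
      map_pow]
    simp only [mul_sub, mul_one, map_sub, hexp]
    ring
  have hH_sub_one : ∀ i, ‖coeff i (H - 1)‖ ≤ (p : ℝ)⁻¹ := fun i => by
    rw [map_sub, coeff_one]
    split_ifs with hi
    · rw [hi, coeff_zero_eq_constantCoeff_apply, hH_one, sub_self, norm_zero]; exact hp0.le
    · rw [sub_zero]; exact hH i hi
  have hD : ‖coeff n (F - f.map φ)‖ ≤ 1 := by
    refine le_of_mul_le_mul_left ?_ hp0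
    rw [← Padic.norm_p, ← norm_mul, hsplit, Padic.norm_p, mul_one]
    refine (IsUltrametricDist.norm_add_le_max _ _).trans (max_le ?_ ?_)
    · exact norm_coeff_expand_mul_le hp.out.one_lt hn hp0.le ih hH_sub_one
    · exact norm_coeff_expand_sub_pow_le f n
  calc ‖coeff n F‖ = ‖coeff n (F - f.map φ) + φ (coeff n f)‖ := by
        rw [map_sub, coeff_map, sub_add_cancel]
    _ ≤ 1 := (IsUltrametricDist.norm_add_le_max _ _).trans (max_le hD (coeff n f).2)

end Padic

section ArtinHasse

/-- The logarithm `∑ⱼ x ^ (p ^ j) / p ^ j` of the Artin–Hasse exponential. -/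
noncomputable def artinHasseLog (p : ℕ) (L : Type*) [Field L] : L⟦X⟧ :=
  PowerSeries.mk fun n => if n ∈ Set.range (p ^ ·) then (n : L)⁻¹ else 0

lemma mul_mem_range_pow_iff {p m : ℕ} (hp : 1 < p) :
    p * m ∈ Set.range (p ^ ·) ↔ m ∈ Set.range (p ^ ·) := by
  constructor
  · rintro ⟨_ | j, hj⟩
    · exact absurd (Nat.eq_one_of_mul_eq_one_right hj.symm) hp.ne'
    · exact ⟨j, Nat.eq_of_mul_eq_mul_left (by omega) ((pow_succ' p j).symm.trans hj)⟩
  · rintro ⟨j, rfl⟩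
    exact ⟨j + 1, pow_succ' p j⟩

lemma mem_range_pow_iff_eq_one {p n : ℕ} (hn : ¬ p ∣ n) : n ∈ Set.range (p ^ ·) ↔ n = 1 := by
  constructor
  · rintro ⟨_ | j, rfl⟩
    · exact pow_zero p
    · exact absurd (dvd_pow_self p j.succ_ne_zero) hn
  · rintro rfl
    exact ⟨0, pow_zero p⟩

lemma artinHasseLog_eq {p : ℕ} (hp : 1 < p) (L : Type*) [Field L] :
    artinHasseLog p L = X + (p : L)⁻¹ • expand p (by omega) (artinHasseLog p L) := by
  ext n
  rw [map_add, coeff_smul, coeff_expand, coeff_X, artinHasseLog, coeff_mk, coeff_mk]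
  by_cases hn : p ∣ n
  · obtain ⟨m, rfl⟩ := hn
    have hpm : p * m ≠ 1 := fun h => hp.ne' (Nat.eq_one_of_mul_eq_one_right h)
    rw [if_neg hpm, if_pos (dvd_mul_right p m), Nat.mul_div_cancel_left m (by omega), zero_add,
      Nat.cast_mul, mul_inv]
    simp only [mul_mem_range_pow_iff hp, smul_eq_mul, mul_ite, mul_zero]
  · rw [if_neg hn, smul_zero, add_zero]
    simp only [mem_range_pow_iff_eq_one hn]
    split_ifs with h1
    · rw [h1, Nat.cast_one, inv_one]
    · rfl

variable {p : ℕ} [hp : Fact p.Prime]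

lemma constantCoeff_artinHasseLog (L : Type*) [Field L] :
    constantCoeff (artinHasseLog p L) = 0 := by
  rw [← coeff_zero_eq_constantCoeff_apply, artinHasseLog, coeff_mk, if_neg]
  rintro ⟨j, hj⟩
  exact pow_ne_zero j hp.out.ne_zero hj

lemma norm_coeff_artinHasse_le_one (n : ℕ) :
    ‖coeff n ((exp ℚ_[p]).subst (artinHasseLog p ℚ_[p]))‖ ≤ 1 := by
  have hp0 : (p : ℚ_[p]) ≠ 0 := mod_cast hp.out.ne_zero
  have hlog := constantCoeff_artinHasseLog (p := p) ℚ_[p]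
  have hpow : p • artinHasseLog p ℚ_[p] =
      expand p hp.out.ne_zero (artinHasseLog p ℚ_[p]) + (p : ℚ_[p]) • X := by
    conv_lhs => rw [artinHasseLog_eq hp.out.one_lt]
    rw [← Nat.cast_smul_eq_nsmul ℚ_[p], smul_add, smul_inv_smul₀ hp0, add_comm]
  refine norm_coeff_le_one_of_pow_eq_expand_mul (constantCoeff_exp_subst hlog) ?_
    (fun _ => norm_coeff_rescale_exp_le) n
  rw [← exp_subst_nsmul hlog, hpow, exp_subst_add (by rwa [constantCoeff_expand]) (by simp),
    expand_exp_subst _ hlog, exp_subst_smul_X]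

end ArtinHasse

section DworkSeries

lemma pred_mul_two_add_add_one_le {p : ℕ} (hp : 1 < p) (j : ℕ) :
    (p - 1) * (2 + j) + 1 ≤ (2 * p - 1) * p ^ j := by
  have hj : j + 1 ≤ p ^ j := Nat.lt_pow_self hp
  obtain ⟨q, hq⟩ : ∃ q, p = q + 1 := ⟨p - 1, by omega⟩
  rw [show p - 1 = q by omega, show 2 * p - 1 = q + (q + 1) by omega]
  nlinarith

/-- The growth factor in the bound for the `n`-th coefficient of `dworkSeries p`. It corresponds to
the estimate `v(b_n) ≥ (n - (2p - 1) ⌊n / p²⌋) / (p - 1)` for the valuation of Dwork's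
coefficients. -/
noncomputable def dworkWeight (p n : ℕ) : ℝ :=
  (expRadius p)⁻¹ ^ ((2 * p - 1) * (n / p ^ 2))

variable (p : ℕ) [hp : Fact p.Prime]

/-- The series `exp (x + x ^ p / p)`. Since `π ^ (p - 1) = -p`, the substitution `x = π t` turns it
into Dwork's series `θ(t) = exp (π (t - t ^ p))`. -/
noncomputable def dworkSeries : ℚ_[p]⟦X⟧ :=
  (exp ℚ_[p]).subst (X + (p : ℚ_[p])⁻¹ • X ^ p : ℚ_[p]⟦X⟧)

lemma one_le_dworkWeight (n : ℕ) : 1 ≤ dworkWeight p n :=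
  one_le_pow₀ (one_lt_inv_expRadius p).le

lemma dworkWeight_mul_le (i j : ℕ) :
    dworkWeight p i * dworkWeight p j ≤ dworkWeight p (i + j) := by
  rw [dworkWeight, dworkWeight, dworkWeight, ← pow_add, ← mul_add]
  exact pow_le_pow_right₀ (one_lt_inv_expRadius p).le
    (Nat.mul_le_mul_left _ Nat.div_add_div_le_add_div)

variable {p}

lemma artinHasseLog_eq_add_expand_sq (L : Type*) [Field L] :
    artinHasseLog p L = X + (p : L)⁻¹ • X ^ p +
      ((p : L) ^ 2)⁻¹ • expand (p ^ 2) (pow_ne_zero 2 hp.out.ne_zero) (artinHasseLog p L) := by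
  conv_lhs => rw [artinHasseLog_eq hp.out.one_lt, artinHasseLog_eq hp.out.one_lt]
  simp only [map_add, expand_X, expand_smul, smul_add, smul_smul, ← expand_mul, sq, mul_inv,
    add_assoc]

lemma norm_coeff_inv_sq_smul_expand_artinHasseLog_le (n : ℕ) :
    ‖coeff n (((p : ℚ_[p]) ^ 2)⁻¹ •
      expand (p ^ 2) (pow_ne_zero 2 hp.out.ne_zero) (artinHasseLog p ℚ_[p]))‖ ≤
      expRadius p * dworkWeight p n := by
  have hρ := expRadius_pos p
  have hnonneg : 0 ≤ expRadius p * dworkWeight p n :=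
    mul_nonneg hρ.le (zero_le_one.trans (one_le_dworkWeight p n))
  rw [coeff_smul, coeff_expand, smul_eq_mul, norm_mul, artinHasseLog, coeff_mk]
  split_ifs with hn hrange
  · obtain ⟨j, hj : p ^ j = n / p ^ 2⟩ := hrange
    calc _ = (p : ℝ) ^ (2 + j) := by
          rw [← hj, norm_inv, norm_inv, norm_pow, Nat.cast_pow, norm_pow, Padic.norm_p, inv_pow,
            inv_pow, inv_inv, inv_inv, pow_add]
      _ = expRadius p * (expRadius p)⁻¹ ^ ((p - 1) * (2 + j) + 1) := by
          rw [pow_succ', mul_inv_cancel_left₀ hρ.ne', pow_mul, inv_expRadius_pow]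
      _ ≤ expRadius p * dworkWeight p n := by
          rw [dworkWeight, ← hj]
          exact mul_le_mul_of_nonneg_left (pow_le_pow_right₀ (one_lt_inv_expRadius p).le
            (pred_mul_two_add_add_one_le hp.out.one_lt j)) hρ.le
  all_goals rwa [norm_zero, mul_zero]

lemma norm_coeff_dworkSeries_le (n : ℕ) : ‖coeff n (dworkSeries p)‖ ≤ dworkWeight p n := by
  have hlog := constantCoeff_artinHasseLog (p := p) ℚ_[p]
  set tail : ℚ_[p]⟦X⟧ := -(((p : ℚ_[p]) ^ 2)⁻¹ •
    expand (p ^ 2) (pow_ne_zero 2 hp.out.ne_zero) (artinHasseLog p ℚ_[p])) with htail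
  have htail_const : constantCoeff tail = 0 := by
    rw [htail, map_neg, ← coeff_zero_eq_constantCoeff_apply, coeff_smul,
      coeff_zero_eq_constantCoeff_apply, constantCoeff_expand, hlog, smul_zero, neg_zero]
  have hfactor : dworkSeries p =
      (exp ℚ_[p]).subst (artinHasseLog p ℚ_[p]) * (exp ℚ_[p]).subst tail := by
    rw [← exp_subst_add hlog htail_const, dworkSeries, htail, ← sub_eq_add_neg, eq_sub_of_add_eq
      (artinHasseLog_eq_add_expand_sq ℚ_[p]).symm]
  rw [hfactor, ← one_mul (dworkWeight p n), ← one_mul (1 : ℝ)]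
  refine norm_coeff_mul_le (dworkWeight_mul_le p) zero_le_one zero_le_one (fun i _ => ?_)
    (fun i _ => ?_)
  · rw [one_mul]
    exact (norm_coeff_artinHasse_le_one i).trans (one_le_dworkWeight p i)
  · rw [one_mul]
    refine norm_coeff_subst_le (dworkWeight_mul_le p) (one_le_dworkWeight p) (expRadius_pos p).le
      htail_const norm_coeff_exp_mul_expRadius_pow_le (fun i => ?_) i
    rw [htail, map_neg, norm_neg]
    exact norm_coeff_inv_sq_smul_expand_artinHasseLog_le i

lemma coeff_dworkSeries (n : ℕ) :
    coeff n (dworkSeries p) = ∑ k ∈ Finset.range (n + 1), if p * k ≤ n then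
      ((n - p * k).factorial : ℚ_[p])⁻¹ * ((p : ℚ_[p])⁻¹ ^ k * (k.factorial : ℚ_[p])⁻¹) else 0 := by
  have hX : (exp ℚ_[p]).subst (X : ℚ_[p]⟦X⟧) = exp ℚ_[p] := by
    simpa only [one_smul, rescale_one, RingHom.id_apply] using exp_subst_smul_X (1 : ℚ_[p])
  have hsubst : dworkSeries p =
      exp ℚ_[p] * expand p hp.out.ne_zero (rescale (p : ℚ_[p])⁻¹ (exp ℚ_[p])) := by
    rw [dworkSeries, exp_subst_add constantCoeff_X (by simp [hp.out.ne_zero]), hX,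
      ← exp_subst_smul_X, expand_exp_subst _ (by simp), expand_smul, expand_X]
  simp only [hsubst, coeff_mul_expand, coeff_rescale, coeff_exp, one_div, map_inv₀, map_natCast]

variable {K : Type*} [NormedField K] {ι : ℚ_[p] →+* K} {π : K}

lemma dworkB_eq (ι : ℚ_[p] →+* K) (hπ : π ^ (p - 1) = -(p : K)) (n : ℕ) :
    AHG.dworkB p π n = π ^ n * ι (coeff n (dworkSeries p)) := by
  have hp0 : (p : K) ≠ 0 := by
    have := (map_ne_zero ι).mpr (Nat.cast_ne_zero.mpr hp.out.ne_zero : (p : ℚ_[p]) ≠ 0)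
    rwa [map_natCast] at this
  rw [AHG.dworkB, coeff_dworkSeries, map_sum, Finset.mul_sum]
  refine Finset.sum_congr rfl fun k _ => ?_
  split_ifs with hk
  swap
  · rw [map_zero, mul_zero]
  have hπk : (-1) ^ k * π ^ k = π ^ (p * k) * (p : K)⁻¹ ^ k := by
    have hπp : π ^ p = -(p : K) * π := by
      rw [← hπ, ← pow_succ, Nat.sub_add_cancel hp.out.one_le]
    rw [pow_mul, hπp, ← mul_pow, ← mul_pow]
    field_simp
  calc (-1) ^ k * π ^ (n - p * k + k) / ((n - p * k).factorial * k.factorial : K)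
      = π ^ (n - p * k) * ((-1) ^ k * π ^ k) *
          (((n - p * k).factorial : K)⁻¹ * (k.factorial : K)⁻¹) := by
        rw [pow_add, div_eq_mul_inv, mul_inv]; ring
    _ = π ^ n * (((n - p * k).factorial : K)⁻¹ * ((p : K)⁻¹ ^ k * (k.factorial : K)⁻¹)) := by
        rw [hπk, ← Nat.sub_add_cancel hk, pow_add, Nat.add_sub_cancel]; ring
    _ = _ := by simp only [map_mul, map_inv₀, map_pow, map_natCast]

lemma norm_natCast_prime (hι : ∀ x, ‖ι x‖ = ‖x‖) : ‖(p : K)‖ = (p : ℝ)⁻¹ := by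
  rw [← map_natCast ι, hι, Padic.norm_p]

lemma norm_dworkB_le (hι : ∀ x, ‖ι x‖ = ‖x‖) (hπ : π ^ (p - 1) = -(p : K)) (n : ℕ) :
    ‖AHG.dworkB p π n‖ ≤ expRadius p ^ n * dworkWeight p n := by
  rw [dworkB_eq ι hπ, norm_mul, norm_pow, hι, norm_eq_expRadius (norm_natCast_prime hι) hπ]
  exact mul_le_mul_of_nonneg_left (norm_coeff_dworkSeries_le n) (pow_nonneg (expRadius_pos p).le n)

lemma norm_prod_dworkB_le (hι : ∀ x, ‖ι x‖ = ‖x‖) (hπ : π ^ (p - 1) = -(p : K)) {α : Type*}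
    (s : Finset α) (c : α → ℕ) :
    ‖∏ i ∈ s, AHG.dworkB p π (c i)‖ ≤
      expRadius p ^ (∑ i ∈ s, c i) * dworkWeight p (∑ i ∈ s, c i) := by
  have hρ := (expRadius_pos p).le
  induction s using Finset.cons_induction with
  | empty => simpa using one_le_dworkWeight p 0
  | cons a s ha ih =>
    rw [Finset.prod_cons, Finset.sum_cons, norm_mul]
    have hw := zero_le_one.trans (one_le_dworkWeight p (c a))
    calc _ ≤ (expRadius p ^ c a * dworkWeight p (c a)) *
          (expRadius p ^ (∑ i ∈ s, c i) * dworkWeight p (∑ i ∈ s, c i)) :=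
          mul_le_mul (norm_dworkB_le hι hπ (c a)) ih (norm_nonneg _)
            (mul_nonneg (pow_nonneg hρ _) hw)
      _ = expRadius p ^ (c a + ∑ i ∈ s, c i) *
          (dworkWeight p (c a) * dworkWeight p (∑ i ∈ s, c i)) := by rw [pow_add]; ring
      _ ≤ _ := mul_le_mul_of_nonneg_left (dworkWeight_mul_le p _ _) (pow_nonneg hρ _)

end DworkSeries

lemma add_add_mul_div_sq_le {p n r m : ℕ} (hp : 3 ≤ p) (hn : 2 ≤ n) (hr : 1 ≤ r)
    (hm : m + r = p * n) : p + n + (2 * p - 1) * (m / p ^ 2) ≤ r + m := by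
  have hfloor : p ^ 2 * (m / p ^ 2) ≤ m := Nat.mul_div_le m (p ^ 2)
  generalize m / p ^ 2 = f at hfloor ⊢
  have hpf : p * f < n := by
    refine lt_of_mul_lt_mul_left (a := p) ?_ (Nat.zero_le p)
    calc p * (p * f) = p ^ 2 * f := by ring
      _ < p * n := by omega
  obtain ⟨q, rfl⟩ : ∃ q, p = q + 3 := ⟨p - 3, by omega⟩
  rw [show 2 * (q + 3) - 1 = 2 * q + 5 by omega]
  rcases Nat.eq_zero_or_pos f with rfl | hf <;> nlinarith

end Dwork

open Dwork in
theorem stmt_6_general (p : ℕ) [hp : Fact p.Prime] (hp2 : p ≠ 2) {K : Type*} [NormedField K]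
    (ι : ℚ_[p] →+* K) (hι : ∀ x, ‖ι x‖ = ‖x‖) {π : K} (hπ : π ^ (p - 1) = -(p : K))
    {n r : ℕ} (hn : 2 ≤ n) (hr : 1 ≤ r) {α : Type*} (s : Finset α) (c : α → ℕ)
    (hc : ∑ i ∈ s, c i + r = p * n) :
    ‖π ^ ((r : ℤ) - (n : ℤ)) * ∏ i ∈ s, AHG.dworkB p π (c i)‖ ≤ expRadius p * (p : ℝ)⁻¹ := by
  have hρ := expRadius_pos p
  have hp3 : 3 ≤ p := lt_of_le_of_ne hp.out.two_le hp2.symm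
  set m := ∑ i ∈ s, c i
  have hexp : p + n + (2 * p - 1) * (m / p ^ 2) ≤ r + m := add_add_mul_div_sq_le hp3 hn hr hc
  calc ‖π ^ ((r : ℤ) - (n : ℤ)) * ∏ i ∈ s, AHG.dworkB p π (c i)‖
      = expRadius p ^ ((r : ℤ) - (n : ℤ)) * ‖∏ i ∈ s, AHG.dworkB p π (c i)‖ := by
        rw [norm_mul, norm_zpow, norm_eq_expRadius (norm_natCast_prime hι) hπ]
    _ ≤ expRadius p ^ ((r : ℤ) - (n : ℤ)) * (expRadius p ^ m * dworkWeight p m) :=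
        mul_le_mul_of_nonneg_left (norm_prod_dworkB_le hι hπ s c) (zpow_pos hρ _).le
    _ = expRadius p ^ ((r + m : ℤ) - (n + ((2 * p - 1) * (m / p ^ 2) : ℕ) : ℤ)) := by
        rw [dworkWeight, inv_pow, ← zpow_natCast, ← zpow_natCast, ← zpow_neg, ← zpow_add₀ hρ.ne',
          ← zpow_add₀ hρ.ne']
        congr 1
        ring
    _ ≤ expRadius p ^ ((p : ℕ) : ℤ) :=
        zpow_le_zpow_right_of_le_one₀ hρ (expRadius_lt_one p).le (by omega)
    _ = expRadius p * (p : ℝ)⁻¹ := by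
        rw [zpow_natCast, ← expRadius_pow, mul_pow_sub_one hp.out.ne_zero]

/-- there is a constant `C ∈ (0,1)` depending only on `p` such that if
`ñ ≥ 2`, `r ≥ 1`, `m ≥ 0`, `m = pñ - r` and `c_1 + ⋯ + c_k = m`, then
`‖π^{r-ñ} b_{c_1} ⋯ b_{c_k}‖ ≤ C·(1/p)`. -/
theorem stmt_6 (p : ℕ) [Fact p.Prime] (hp2 : p ≠ 2) :
    ∃ C : ℝ, 0 < C ∧ C < 1 ∧
      ∀ (K : Type*) [NormedField K] [IsUltrametricDist K] [CompleteSpace K] [IsAlgClosed K],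
        ∀ (ι : ℚ_[p] →+* K), (∀ x, ‖ι x‖ = ‖x‖) →
        ∀ π : K, π ^ (p - 1) = -(p : K) →
        ∀ m r nt : ℕ, 2 ≤ nt → 1 ≤ r → (m : ℤ) = p * nt - r →
        ∀ k : ℕ, 1 ≤ k → ∀ c : Fin k → ℕ, (∑ i, c i) = m →
        ‖π ^ ((r : ℤ) - (nt : ℤ)) * ∏ i, AHG.dworkB p π (c i)‖ ≤ C * (p : ℝ)⁻¹ := by
  refine ⟨Dwork.expRadius p, Dwork.expRadius_pos p, Dwork.expRadius_lt_one p, ?_⟩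
  intro K _ _ _ _ ι hι π hπ m r n hn hr hm k _ c hc
  exact stmt_6_general p hp2 ι hι hπ hn hr Finset.univ c (by rw [hc]; zify; linarith)
end
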